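/- arXiv:1710.09513 — 2 statements merged into one kernel-verified Lean document; each statement's English description precedes it below -/
import Mathlib

section
/- (Extended PMP, Proposition 2, as proved.) Fix ρ > 0. Suppose f(t,·,θ) is twice continuously differentiable in x for each t, θ. Let (X*, P*, θ*) be a tuple satisfying the PMP conditions: Ẋ*_t = f(t, X*_t, θ*_t) with X*_0 = x, Ṗ*_t = −∇_x H(t, X*_t, P*_t, θ*_t) with P*_T = −∇Φ(X*_T), and H(t, X*_t, P*_t, θ*_t) ≥ H(t, X*_t, P*_t, θ) for all θ ∈ Θ and t ∈ [0,T]. Then the tuple satisfies the extended PMP: Ẋ*_t = ∇_p H̃(t, X*_t, P*_t, θ*_t, Ẋ*_t, Ṗ*_t), Ṗ*_t = −∇_x H̃(t, X*_t, P*_t, θ*_t, Ẋ*_t, Ṗ*_t), and H̃(t, X*_t, P*_t, θ*_t, Ẋ*_t, Ṗ*_t) ≥ H̃(t, X*_t, P*_t, θ, Ẋ*_t, Ṗ*_t) for all θ ∈ Θ and t ∈ [0,T]. -/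
open MeasureTheory Set Filter Topology
open scoped RealInnerProductSpace

noncomputable section

/-- Euclidean space `ℝ^n`. -/
abbrev Euc (n : ℕ) : Type := EuclideanSpace ℝ (Fin n)

/-- The control Hamiltonian `H(t, x, p, θ) = ⟪p, f(t, x, θ)⟫ - L(θ)`. -/
def Ham {d m : ℕ} (f : ℝ → Euc d → Euc m → Euc d) (L : Euc m → ℝ)
    (t : ℝ) (x pp : Euc d) (θ : Euc m) : ℝ :=
  ⟪pp, f t x θ⟫ - L θ

/-- The augmented Hamiltonian
`H̃(t,x,p,θ,v,q) = H(t,x,p,θ) - (ρ/2)‖v - f(t,x,θ)‖² - (ρ/2)‖q + ∇ₓH(t,x,p,θ)‖²`. -/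
def augHam {d m : ℕ} (ρ : ℝ) (f : ℝ → Euc d → Euc m → Euc d) (L : Euc m → ℝ)
    (t : ℝ) (x pp : Euc d) (θ : Euc m) (v q : Euc d) : ℝ :=
  Ham f L t x pp θ - ρ / 2 * ‖v - f t x θ‖ ^ 2
    - ρ / 2 * ‖q + gradient (fun y => Ham f L t y pp θ) x‖ ^ 2

/-!
Along a PMP extremal the two penalties `‖v - f‖²` and `‖q + ∇ₓH‖²`, taken at `v = Ẋ` and `q = Ṗ`,
vanish. They are squares, so they vanish to second order and do not change the gradients of `H` in
the state and the costate; they are nonnegative, so subtracting them preserves the maximality of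
`H` in the control.
-/

section HilbertSpace

open scoped Gradient

variable {E F U : Type*} [NormedAddCommGroup E] [InnerProductSpace ℝ E] [CompleteSpace E]
  [NormedAddCommGroup F] [InnerProductSpace ℝ F]

theorem hasGradientAt_inner_const (a p : E) : HasGradientAt (fun p' => ⟪p', a⟫) a p := by
  simp_rw [real_inner_comm a]
  exact (InnerProductSpace.toDual ℝ E a).hasFDerivAt

theorem hasGradientAt_const_inner [CompleteSpace F] {g : E → F} {g' : E →L[ℝ] F} {x : E}
    (hg : HasFDerivAt g g' x) (p : F) :
    HasGradientAt (fun y => ⟪p, g y⟫) (g'.adjoint p) x := by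
  refine ((innerSL ℝ p).hasFDerivAt.comp x hg).congr_fderiv ?_
  ext w
  simp [ContinuousLinearMap.adjoint_inner_left]

theorem hasGradientAt_sub_mul_norm_sq {g : E → ℝ} {g' x : E} {r : E → F}
    (hg : HasGradientAt g g' x) (hr : DifferentiableAt ℝ r x) (hrx : r x = 0) (c : ℝ) :
    HasGradientAt (fun y => g y - c * ‖r y‖ ^ 2) g' x := by
  have hpenalty : HasFDerivAt (fun y => c * ‖r y‖ ^ 2) (0 : E →L[ℝ] ℝ) x := by
    simpa [hrx] using hr.hasFDerivAt.norm_sq.const_mul c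
  exact (hg.hasFDerivAt.sub hpenalty).congr_fderiv (sub_zero _)

theorem differentiableAt_gradient {g : E → ℝ} {x : E} (hg : ContDiffAt ℝ 2 g x) :
    DifferentiableAt ℝ (∇ g) x :=
  (InnerProductSpace.toDual ℝ E).symm.toContinuousLinearEquiv.differentiableAt.comp x <|
    (hg.fderiv_right (m := 1) one_add_one_eq_two.le).differentiableAt_one

/-- The control Hamiltonian at a fixed time, for states in a Hilbert space and controls in an
arbitrary type: `Ham f L t` is definitionally `hamiltonian (f t) L`. -/
def hamiltonian (f : E → U → E) (L : U → ℝ) (x p : E) (u : U) : ℝ :=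
  ⟪p, f x u⟫ - L u

/-- The augmented Hamiltonian at a fixed time, in the setting of `hamiltonian`: `augHam ρ f L t` is
definitionally `augmentedHamiltonian ρ (f t) L`. -/
def augmentedHamiltonian (ρ : ℝ) (f : E → U → E) (L : U → ℝ) (x p : E) (u : U) (v q : E) : ℝ :=
  hamiltonian f L x p u - ρ / 2 * ‖v - f x u‖ ^ 2
    - ρ / 2 * ‖q + ∇ (fun y => hamiltonian f L y p u) x‖ ^ 2

variable {f : E → U → E} {L : U → ℝ} {x p : E} {u : U}

theorem hasGradientAt_hamiltonian_costate :
    HasGradientAt (fun p' => hamiltonian f L x p' u) (f x u) p :=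
  (hasGradientAt_inner_const (f x u) p).hasFDerivAt.sub_const (L u)

theorem hasGradientAt_hamiltonian_state (hf : DifferentiableAt ℝ (fun y => f y u) x) :
    HasGradientAt (fun y => hamiltonian f L y p u)
      ((fderiv ℝ (fun y => f y u) x).adjoint p) x :=
  (hasGradientAt_const_inner hf.hasFDerivAt p).hasFDerivAt.sub_const (L u)

theorem hasGradientAt_augmentedHamiltonian_costate (ρ : ℝ)
    (hf : DifferentiableAt ℝ (fun y => f y u) x) :
    HasGradientAt (fun p' => augmentedHamiltonian ρ f L x p' u (f x u)
      (-∇ (fun y => hamiltonian f L y p u) x)) (f x u) p := by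
  have hgrad : (fun p' => ∇ (fun y => hamiltonian f L y p' u) x) =
      (fderiv ℝ (fun y => f y u) x).adjoint :=
    funext fun _ => (hasGradientAt_hamiltonian_state hf).gradient
  have hgrad_diff :
      DifferentiableAt ℝ (fun p' => ∇ (fun y => hamiltonian f L y p' u) x) p :=
    hgrad ▸ ContinuousLinearMap.differentiableAt _
  exact hasGradientAt_sub_mul_norm_sq
    (hasGradientAt_sub_mul_norm_sq hasGradientAt_hamiltonian_costate
      (differentiableAt_const _) (sub_self _) _)
    (hgrad_diff.const_add _) (neg_add_cancel _) _

theorem hasGradientAt_augmentedHamiltonian_state (ρ : ℝ)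
    (hf : ContDiffAt ℝ 2 (fun y => f y u) x) :
    HasGradientAt (fun y => augmentedHamiltonian ρ f L y p u (f x u)
      (-∇ (fun z => hamiltonian f L z p u) x)) (∇ (fun y => hamiltonian f L y p u) x) x := by
  have hf_diff : DifferentiableAt ℝ (fun y => f y u) x := hf.differentiableAt two_ne_zero
  have hH : ContDiffAt ℝ 2 (fun y => hamiltonian f L y p u) x :=
    (contDiffAt_const.inner ℝ hf).sub contDiffAt_const
  exact hasGradientAt_sub_mul_norm_sq
    (hasGradientAt_sub_mul_norm_sq (hH.differentiableAt two_ne_zero).hasGradientAt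
      (hf_diff.const_sub _) (sub_self _) _)
    ((differentiableAt_gradient hH).const_add _) (neg_add_cancel _) _

theorem augmentedHamiltonian_le_hamiltonian {ρ : ℝ} (hρ : 0 ≤ ρ) (v q : E) :
    augmentedHamiltonian ρ f L x p u v q ≤ hamiltonian f L x p u := by
  rw [augmentedHamiltonian, sub_sub]
  exact sub_le_self _ (by positivity)

theorem augmentedHamiltonian_eq_hamiltonian (ρ : ℝ) :
    augmentedHamiltonian ρ f L x p u (f x u) (-∇ (fun y => hamiltonian f L y p u) x) =
      hamiltonian f L x p u := by
  simp [augmentedHamiltonian]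

theorem extended_pmp_general {ρ : ℝ} (hρ : 0 ≤ ρ) {s : Set ℝ} {Θ : Set U} {f : ℝ → E → U → E}
    {θs : ℝ → U} {Xs Ps : ℝ → E}
    (hf : ∀ t ∈ s, ContDiffAt ℝ 2 (fun y => f t y (θs t)) (Xs t))
    (hX : ∀ t ∈ s, HasDerivAt Xs (f t (Xs t) (θs t)) t)
    (hP : ∀ t ∈ s,
      HasDerivAt Ps (-∇ (fun y => hamiltonian (f t) L y (Ps t) (θs t)) (Xs t)) t)
    (hmax : ∀ t ∈ s, ∀ θ ∈ Θ,
      hamiltonian (f t) L (Xs t) (Ps t) θ ≤ hamiltonian (f t) L (Xs t) (Ps t) (θs t)) :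
    ∀ t ∈ s,
      HasDerivAt Xs
        (∇ (fun p => augmentedHamiltonian ρ (f t) L (Xs t) p (θs t) (f t (Xs t) (θs t))
          (-∇ (fun y => hamiltonian (f t) L y (Ps t) (θs t)) (Xs t))) (Ps t)) t ∧
      HasDerivAt Ps
        (-∇ (fun y => augmentedHamiltonian ρ (f t) L y (Ps t) (θs t) (f t (Xs t) (θs t))
          (-∇ (fun z => hamiltonian (f t) L z (Ps t) (θs t)) (Xs t))) (Xs t)) t ∧
      ∀ θ ∈ Θ,
        augmentedHamiltonian ρ (f t) L (Xs t) (Ps t) θ (f t (Xs t) (θs t))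
            (-∇ (fun y => hamiltonian (f t) L y (Ps t) (θs t)) (Xs t)) ≤
          augmentedHamiltonian ρ (f t) L (Xs t) (Ps t) (θs t) (f t (Xs t) (θs t))
            (-∇ (fun y => hamiltonian (f t) L y (Ps t) (θs t)) (Xs t)) := by
  intro t ht
  refine ⟨?_, ?_, fun θ hθ => ?_⟩
  · rw [(hasGradientAt_augmentedHamiltonian_costate ρ
      ((hf t ht).differentiableAt two_ne_zero)).gradient]
    exact hX t ht
  · rw [(hasGradientAt_augmentedHamiltonian_state ρ (hf t ht)).gradient]
    exact hP t ht
  · rw [augmentedHamiltonian_eq_hamiltonian]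
    exact (augmentedHamiltonian_le_hamiltonian hρ _ _).trans (hmax t ht θ hθ)

end HilbertSpace

/-- **Extended PMP** (Proposition 2, as proved).  If the tuple `(Xs, Ps, θs)` satisfies the PMP
conditions, then it also satisfies the extended PMP conditions for the augmented Hamiltonian
`H̃` (for any fixed `ρ > 0`). -/
theorem extended_pmp
    (d m : ℕ) (T : ℝ) (hT : 0 < T) (Θ : Set (Euc m)) (ρ : ℝ) (hρ : 0 < ρ)
    (f : ℝ → Euc d → Euc m → Euc d) (L : Euc m → ℝ) (Φ : Euc d → ℝ)
    (x0 : Euc d)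
    (hf2 : ∀ (t : ℝ) (θ : Euc m), ContDiff ℝ 2 fun y => f t y θ)
    (θs : ℝ → Euc m) (hθmeas : Measurable θs) (hθΘ : ∀ t, θs t ∈ Θ)
    (Xs Ps : ℝ → Euc d) (hX0 : Xs 0 = x0)
    (hXode : ∀ t ∈ Icc (0 : ℝ) T, HasDerivAt Xs (f t (Xs t) (θs t)) t)
    (hPT : Ps T = -gradient Φ (Xs T))
    (hPode : ∀ t ∈ Icc (0 : ℝ) T,
      HasDerivAt Ps (-(gradient (fun y => Ham f L t y (Ps t) (θs t)) (Xs t))) t)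
    (hmax : ∀ t ∈ Icc (0 : ℝ) T, ∀ θ ∈ Θ,
      Ham f L t (Xs t) (Ps t) θ ≤ Ham f L t (Xs t) (Ps t) (θs t)) :
    ∀ t ∈ Icc (0 : ℝ) T,
      HasDerivAt Xs
        (gradient
          (fun pp => augHam ρ f L t (Xs t) pp (θs t) (f t (Xs t) (θs t))
            (-(gradient (fun y => Ham f L t y (Ps t) (θs t)) (Xs t)))) (Ps t)) t ∧
      HasDerivAt Ps
        (-(gradient
          (fun y => augHam ρ f L t y (Ps t) (θs t) (f t (Xs t) (θs t))
            (-(gradient (fun z => Ham f L t z (Ps t) (θs t)) (Xs t)))) (Xs t))) t ∧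
      ∀ θ ∈ Θ,
        augHam ρ f L t (Xs t) (Ps t) θ (f t (Xs t) (θs t))
            (-(gradient (fun y => Ham f L t y (Ps t) (θs t)) (Xs t))) ≤
          augHam ρ f L t (Xs t) (Ps t) (θs t) (f t (Xs t) (θs t))
            (-(gradient (fun y => Ham f L t y (Ps t) (θs t)) (Xs t))) :=
  extended_pmp_general hρ.le (fun t _ => (hf2 t (θs t)).contDiffAt) hXode hPode hmax
end
end

section
/- (Characterization of fixed points of E-MSA: the case μ_k = 0.) Let θ : [0,T] → Θ be a measurable control with state X^θ and co-state P^θ (so Ẋ^θ_t = f(t, X^θ_t, θ_t), Ṗ^θ_t = −∇_x H(t, X^θ_t, P^θ_t, θ_t)). Suppose φ : [0,T] → Θ satisfies, for every t ∈ [0,T], φ_t = argmax_{θ′∈Θ} H̃(t, X^θ_t, P^θ_t, θ′, Ẋ^θ_t, Ṗ^θ_t), and suppose μ := ∫₀^T [H(t, X^θ_t, P^θ_t, φ_t) − H(t, X^θ_t, P^θ_t, θ_t)] dt = 0. Then ∫₀^T ‖f(t, X^θ_t, φ_t) − f(t, X^θ_t, θ_t)‖² dt = 0 and ∫₀^T ‖∇_x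 H(t, X^θ_t, P^θ_t, φ_t) − ∇_x H(t, X^θ_t, P^θ_t, θ_t)‖² dt = 0, and for almost every t ∈ [0,T], θ_t itself maximizes θ′ ↦ H̃(t, X^θ_t, P^θ_t, θ′, Ẋ^θ_t, Ṗ^θ_t) over Θ; that is, (X^θ, P^θ, θ) satisfies the extended PMP. -/
open MeasureTheory Set Filter Topology
open scoped RealInnerProductSpace

noncomputable section

/-! Once the state and co-state are fixed, `H`, `f` and `∇ₓH` act only as functions of time and
control, and the augmented Hamiltonian is `H` minus a nonnegative penalty that vanishes at `θ_t`.
Comparing its values at `φ_t` and `θ_t` bounds the penalty at `φ_t` by the Hamiltonian gain.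
The gain is therefore nonnegative, so having integral zero it vanishes almost everywhere, and with
it the penalty; at such a time `θ_t` attains the same augmented value as the maximizer `φ_t`. -/

section PenalizedMaximizer

variable {C M : Type*} [AddCommGroup M] [Preorder M] [IsOrderedAddMonoid M]
  {h π : C → M} {S : Set C} {a b : C}

theorem penalty_le_sub_of_isMaxOn (hmax : IsMaxOn (fun c => h c - π c) S b) (ha : a ∈ S)
    (hπa : π a = 0) : π b ≤ h b - h a := by
  have hab : h a - π a ≤ h b - π b := hmax ha
  rw [hπa, sub_zero] at hab
  exact le_sub_comm.mp hab

theorem isMaxOn_sub_penalty_of_le (hmax : IsMaxOn (fun c => h c - π c) S b) (hπa : π a = 0)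
    (hπb : 0 ≤ π b) (hba : h b ≤ h a) : IsMaxOn (fun c => h c - π c) S a := fun c hc =>
  calc
    h c - π c ≤ h b - π b := hmax hc
    _ ≤ h b := sub_le_self _ hπb
    _ ≤ h a := hba
    _ = h a - π a := by rw [hπa, sub_zero]

end PenalizedMaximizer

section AlmostEverywhere

variable {α C : Type*} [MeasurableSpace α] {ν : Measure α} {h π : α → C → ℝ} {S : Set C}
  {θ φ : α → C}

theorem ae_penalty_eq_zero_and_isMaxOn_of_integral_sub_eq_zero
    (hθ : ∀ᵐ t ∂ν, θ t ∈ S) (hπθ : ∀ᵐ t ∂ν, π t (θ t) = 0) (hπφ : ∀ᵐ t ∂ν, 0 ≤ π t (φ t))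
    (hmax : ∀ᵐ t ∂ν, IsMaxOn (fun c => h t c - π t c) S (φ t))
    (hint : Integrable (fun t => h t (φ t) - h t (θ t)) ν)
    (hzero : ∫ t, (h t (φ t) - h t (θ t)) ∂ν = 0) :
    ∀ᵐ t ∂ν, π t (φ t) = 0 ∧ IsMaxOn (fun c => h t c - π t c) S (θ t) := by
  have penalty_le_gain : ∀ᵐ t ∂ν, π t (φ t) ≤ h t (φ t) - h t (θ t) := by
    filter_upwards [hmax, hθ, hπθ] with t hmax hθ hπθ
    exact penalty_le_sub_of_isMaxOn hmax hθ hπθ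
  have gain_nonneg : 0 ≤ᵐ[ν] fun t => h t (φ t) - h t (θ t) := by
    filter_upwards [hπφ, penalty_le_gain] with t hπφ hle
    exact hπφ.trans hle
  have gain_eq_zero : (fun t => h t (φ t) - h t (θ t)) =ᵐ[ν] 0 :=
    (integral_eq_zero_iff_of_nonneg_ae gain_nonneg hint).mp hzero
  filter_upwards [hmax, hπθ, hπφ, penalty_le_gain, gain_eq_zero] with t hmax hπθ hπφ hle hgain
  exact ⟨le_antisymm (hle.trans_eq hgain) hπφ,
    isMaxOn_sub_penalty_of_le hmax hπθ hπφ (sub_eq_zero.mp hgain).le⟩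

end AlmostEverywhere

section FeasibilityPenalty

variable {C E E' : Type*} [SeminormedAddCommGroup E] [SeminormedAddCommGroup E'] {ρ : ℝ}

/-- The quadratic penalty of the augmented Hamiltonian for replacing the control value `a` by `c`.
The maps `F` and `G` stand for `f` and `∇ₓH` as functions of the control, at a fixed time, state
and co-state. -/
def feasibilityPenalty (ρ : ℝ) (F : C → E) (G : C → E') (a c : C) : ℝ :=
  ρ / 2 * ‖F c - F a‖ ^ 2 + ρ / 2 * ‖G c - G a‖ ^ 2

@[simp]
theorem feasibilityPenalty_self (ρ : ℝ) (F : C → E) (G : C → E') (a : C) :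
    feasibilityPenalty ρ F G a a = 0 := by
  simp [feasibilityPenalty]

theorem feasibilityPenalty_nonneg (hρ : 0 ≤ ρ) (F : C → E) (G : C → E') (a c : C) :
    0 ≤ feasibilityPenalty ρ F G a c := by
  unfold feasibilityPenalty
  positivity

theorem augHam_eq_ham_sub_feasibilityPenalty {d m : ℕ} (ρ : ℝ) (f : ℝ → Euc d → Euc m → Euc d)
    (L : Euc m → ℝ) (t : ℝ) (x p : Euc d) (a c : Euc m) :
    augHam ρ f L t x p c (f t x a) (-gradient (fun y => Ham f L t y p a) x) =
      Ham f L t x p c -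
        feasibilityPenalty ρ (f t x) (fun b => gradient (fun y => Ham f L t y p b) x) a c := by
  rw [augHam, feasibilityPenalty, norm_sub_rev (f t x a), neg_add_eq_sub, sub_sub]

end FeasibilityPenalty

theorem integral_norm_sub_sq_eq_zero_of_ae_eq {α E : Type*} [MeasurableSpace α]
    [SeminormedAddCommGroup E] {ν : Measure α} {u v : α → E} (huv : ∀ᵐ t ∂ν, u t = v t) :
    ∫ t, ‖u t - v t‖ ^ 2 ∂ν = 0 :=
  integral_eq_zero_of_ae (huv.mono fun t ht => by simp [ht])

section FixedPoint

variable {C E E' : Type*} [NormedAddCommGroup E] [NormedAddCommGroup E'] {ρ : ℝ}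

theorem feasibilityPenalty_eq_zero_iff (hρ : 0 < ρ) {F : C → E} {G : C → E'} {a c : C} :
    feasibilityPenalty ρ F G a c = 0 ↔ F c = F a ∧ G c = G a := by
  rw [feasibilityPenalty, add_eq_zero_iff_of_nonneg (by positivity) (by positivity)]
  simp [hρ.ne', sub_eq_zero]

theorem emsa_fixed_point_characterization_general {α : Type*} [MeasurableSpace α] {ν : Measure α}
    (hρ : 0 < ρ) {H : α → C → ℝ} {F : α → C → E} {G : α → C → E'} {Θ : Set C} {θ φ : α → C}
    (hθ : ∀ᵐ t ∂ν, θ t ∈ Θ)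
    (hmax : ∀ᵐ t ∂ν,
      IsMaxOn (fun c => H t c - feasibilityPenalty ρ (F t) (G t) (θ t) c) Θ (φ t))
    (hint : Integrable (fun t => H t (φ t) - H t (θ t)) ν)
    (hμ : ∫ t, (H t (φ t) - H t (θ t)) ∂ν = 0) :
    (∀ᵐ t ∂ν, F t (φ t) = F t (θ t)) ∧ (∀ᵐ t ∂ν, G t (φ t) = G t (θ t)) ∧
      ∀ᵐ t ∂ν, IsMaxOn (fun c => H t c - feasibilityPenalty ρ (F t) (G t) (θ t) c) Θ (θ t) := by
  have hae := ae_penalty_eq_zero_and_isMaxOn_of_integral_sub_eq_zero hθ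
    (.of_forall fun _ => feasibilityPenalty_self ..)
    (.of_forall fun _ => feasibilityPenalty_nonneg hρ.le ..) hmax hint hμ
  simpa only [feasibilityPenalty_eq_zero_iff hρ, eventually_and, and_assoc] using hae

end FixedPoint

/-- **Characterization of fixed points of E-MSA** (the case `μ_k = 0`).  If for every `t` the
value `φ_t` maximizes the augmented Hamiltonian at the state/co-state of `θ` and the Hamiltonian
increment `μ = ∫₀^T ΔH(t) dt` vanishes, then both feasibility-error integrals vanish and for
almost every `t`, `θ_t` itself maximizes the augmented Hamiltonian: `(X^θ, P^θ, θ)` satisfies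
the extended PMP. -/
theorem emsa_fixed_point_characterization
    (d m : ℕ) (T : ℝ) (hT : 0 < T) (Θ : Set (Euc m)) (ρ : ℝ) (hρ : 0 < ρ)
    (f : ℝ → Euc d → Euc m → Euc d) (L : Euc m → ℝ) (Φ : Euc d → ℝ) (x0 : Euc d)
    (hfdiff : ∀ (t : ℝ) (θc : Euc m), ContDiff ℝ 1 fun y => f t y θc)
    (θ φ : ℝ → Euc m) (hθmeas : Measurable θ) (hφmeas : Measurable φ)
    (hθΘ : ∀ t, θ t ∈ Θ) (hφΘ : ∀ t, φ t ∈ Θ)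
    (Xθ Pθ : ℝ → Euc d) (hXθ0 : Xθ 0 = x0)
    (hXθode : ∀ t ∈ Icc (0 : ℝ) T, HasDerivAt Xθ (f t (Xθ t) (θ t)) t)
    (hPθT : Pθ T = -gradient Φ (Xθ T))
    (hPθode : ∀ t ∈ Icc (0 : ℝ) T,
      HasDerivAt Pθ (-(gradient (fun y => Ham f L t y (Pθ t) (θ t)) (Xθ t))) t)
    -- `φ_t` maximizes the augmented Hamiltonian over `Θ` for every `t ∈ [0,T]`
    (hmax : ∀ t ∈ Icc (0 : ℝ) T, ∀ θ' ∈ Θ,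
      augHam ρ f L t (Xθ t) (Pθ t) θ' (f t (Xθ t) (θ t))
          (-(gradient (fun y => Ham f L t y (Pθ t) (θ t)) (Xθ t))) ≤
        augHam ρ f L t (Xθ t) (Pθ t) (φ t) (f t (Xθ t) (θ t))
          (-(gradient (fun y => Ham f L t y (Pθ t) (θ t)) (Xθ t))))
    -- the Hamiltonian increment is a well-defined integral
    (hint : IntervalIntegrable
      (fun t => Ham f L t (Xθ t) (Pθ t) (φ t) - Ham f L t (Xθ t) (Pθ t) (θ t))
      volume 0 T)
    (hμ : ∫ t in (0 : ℝ)..T,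
      (Ham f L t (Xθ t) (Pθ t) (φ t) - Ham f L t (Xθ t) (Pθ t) (θ t)) = 0) :
    (∫ t in (0 : ℝ)..T, ‖f t (Xθ t) (φ t) - f t (Xθ t) (θ t)‖ ^ 2 = 0) ∧
    (∫ t in (0 : ℝ)..T,
      ‖gradient (fun y => Ham f L t y (Pθ t) (φ t)) (Xθ t) -
          gradient (fun y => Ham f L t y (Pθ t) (θ t)) (Xθ t)‖ ^ 2 = 0) ∧
    (∀ᵐ t ∂(volume.restrict (Icc (0 : ℝ) T)), ∀ θ' ∈ Θ,
      augHam ρ f L t (Xθ t) (Pθ t) θ' (f t (Xθ t) (θ t))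
          (-(gradient (fun y => Ham f L t y (Pθ t) (θ t)) (Xθ t))) ≤
        augHam ρ f L t (Xθ t) (Pθ t) (θ t) (f t (Xθ t) (θ t))
          (-(gradient (fun y => Ham f L t y (Pθ t) (θ t)) (Xθ t)))) := by
  simp only [augHam_eq_ham_sub_feasibilityPenalty, intervalIntegral.integral_of_le hT.le,
    ← integral_Icc_eq_integral_Ioc] at hmax hμ ⊢
  obtain ⟨hf, hgrad, hmaxθ⟩ := emsa_fixed_point_characterization_general hρ (.of_forall hθΘ)
    (ae_restrict_of_forall_mem measurableSet_Icc hmax)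
    ((intervalIntegrable_iff_integrableOn_Icc_of_le hT.le).mp hint) hμ
  exact ⟨integral_norm_sub_sq_eq_zero_of_ae_eq hf, integral_norm_sub_sq_eq_zero_of_ae_eq hgrad,
    hmaxθ⟩
end
end
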